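/- Let α, β be reals with 2 < α ≤ 3 and 4α − β = 6, and let G be a minimal counterexample for the class 𝔅 of bipartite graphs and parameters α, β, with n = |V(G)|. Let A ⊆ V(G) be an independent set of G that maximizes the number of edges e(X, V(G)∖X) between X and its complement over all independent sets X of G, and set k = |A| and m = e(A, V(G)∖A). Then |E(G)| ≥ m + 2n − 2k − 3. -/

import Mathlib

/-!
Write `W = V ∖ A`.  Since `A` is independent, `|E(G)| = m + e(G[W])`, so the claim is
`e(G[W]) ≥ 2|W| - 3`.  If it fails, the Chen–Yu theorem (a graph with `N` vertices and at most
`2N - 4` edges has an independent cut) yields an independent cut `T` of `G[W]`, and then `A ∪ T`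
is a bipartite cut of `G`, which is impossible.

The Chen–Yu theorem is `exists_indepSep`, proved by induction on the number of vertices in the
stronger form: for every vertex `u` there is an independent cut `T` with `u ∉ T` or `T = {u}`.
If the neighbourhood of `u` is independent, it is such a cut, or else `u` is the centre of a star
and `{u}` is one.  Otherwise `u` lies in a triangle `u x y`.  Contracting `u x` loses at least two
edges, so the induction hypothesis applies to the contracted graph and its vertex `u`.  A cut
avoiding `u` is a cut of the original graph; if the cut is `{u}`, then `{u, x}` separates the
original graph into two graphs sharing only the edge `u x`.  Counting edges, one of the two
satisfies the hypothesis again, and a cut of it cannot separate the adjacent vertices `u`, `x`, so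
it is a cut of the whole graph.

Subgraphs are encoded as vertex sets `W` of a fixed type, so that all graphs in the induction live
on the same type.
-/


open SimpleGraph

/-- `M` is a vertex cut of `G`: the complement of `M` can be partitioned into two nonempty
sets `L`, `R` with no edge of `G` joining a vertex of `L` to a vertex of `R`. -/
def IsVertexCut {V : Type*} (G : SimpleGraph V) (M : Set V) : Prop :=
  ∃ L R : Set V, L.Nonempty ∧ R.Nonempty ∧ Disjoint L R ∧ L ∪ R = Mᶜ ∧
    ∀ x ∈ L, ∀ y ∈ R, ¬ G.Adj x y

/-- `(M, L, R)` is a separation of `G`. -/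
def IsSeparation {V : Type*} (G : SimpleGraph V) (M L R : Set V) : Prop :=
  L.Nonempty ∧ R.Nonempty ∧ M ∪ L ∪ R = Set.univ ∧
  Disjoint M L ∧ Disjoint M R ∧ Disjoint L R ∧
  ∀ x ∈ L, ∀ y ∈ R, ¬ G.Adj x y

/-- The quality function `q_{α,β}(G) = α|V(G)| − |E(G)| − β`. -/
noncomputable def quality {V : Type*} (α β : ℝ) (G : SimpleGraph V) : ℝ :=
  α * Nat.card V - Nat.card G.edgeSet - β

/-- degree of a vertex as the cardinality of its neighbor set. -/
noncomputable def vdeg {V : Type*} (G : SimpleGraph V) (v : V) : ℕ :=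
  (G.neighborSet v).ncard

/-- The class of forests. -/
def ForestClass : ∀ (W : Type), SimpleGraph W → Prop := fun _ H => H.IsAcyclic

/-- The class of bipartite graphs. -/
def BipartiteClass : ∀ (W : Type), SimpleGraph W → Prop := fun _ H => H.Colorable 2

/-- `G` has a `Ψ`-cut: a vertex cut whose induced subgraph lies in `Ψ`. -/
def HasPsiCut (Ψ : ∀ (W : Type), SimpleGraph W → Prop) {V : Type} (G : SimpleGraph V) : Prop :=
  ∃ M : Set V, IsVertexCut G M ∧ Ψ ↥M (G.induce M)

/-- `G` has a forest cut. -/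
def HasForestCut {V : Type*} (G : SimpleGraph V) : Prop :=
  ∃ M : Set V, IsVertexCut G M ∧ (G.induce M).IsAcyclic

/-- `G` has a bipartite cut. -/
def HasBipartiteCut {V : Type*} (G : SimpleGraph V) : Prop :=
  ∃ M : Set V, IsVertexCut G M ∧ (G.induce M).Colorable 2

/-- `G` has an independent cut. -/
def HasIndependentCut {V : Type*} (G : SimpleGraph V) : Prop :=
  ∃ M : Set V, IsVertexCut G M ∧ ∀ x ∈ M, ∀ y ∈ M, ¬ G.Adj x y

/-- `G` is a minimal counterexample for the class `Ψ` and parameters `α`, `β`. -/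
def MinCounterexample (Ψ : ∀ (W : Type), SimpleGraph W → Prop) (α β : ℝ)
    {V : Type} (G : SimpleGraph V) : Prop :=
  4 ≤ Nat.card V ∧ 0 < quality α β G ∧ ¬ HasPsiCut Ψ G ∧
  ∀ (W : Type) (H : SimpleGraph W),
    4 ≤ Nat.card W → Nat.card W < Nat.card V → 0 < quality α β H → HasPsiCut Ψ H

/-- `T0`: a triangle together with an isolated vertex. -/
def graphT0 : SimpleGraph (Fin 4) := SimpleGraph.fromEdgeSet {s(0,1), s(0,2), s(1,2)}

/-- `T1`: a triangle with an extra vertex joined to exactly one triangle vertex. -/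
def graphT1 : SimpleGraph (Fin 4) := SimpleGraph.fromEdgeSet {s(0,1), s(0,2), s(1,2), s(2,3)}

/-- The diamond graph `K4` minus one edge. -/
def diamondGraph : SimpleGraph (Fin 4) := (⊤ : SimpleGraph (Fin 4)).deleteEdges {s(0,1)}

/-- Number of edges of `G` with one endpoint in `X` and the other outside `X`. -/
noncomputable def crossEdges {V : Type*} (G : SimpleGraph V) (X : Set V) : ℕ :=
  {e : Sym2 V | e ∈ G.edgeSet ∧ ∃ x ∈ X, ∃ y ∉ X, e = s(x,y)}.ncard

/-- The edges of `G` with both endpoints in `W`. -/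
def edgesIn {V : Type*} (G : SimpleGraph V) (W : Set V) : Set (Sym2 V) :=
  {e | e ∈ G.edgeSet ∧ ∀ v ∈ e, v ∈ W}

/-- `T` is an independent cut of `G[W]`, separating it into `L` and `R`. -/
structure IndepSep {V : Type*} (G : SimpleGraph V) (W T L R : Set V) : Prop where
  neL : L.Nonempty
  neR : R.Nonempty
  union : ∀ v, v ∈ W ↔ v ∈ T ∨ v ∈ L ∨ v ∈ R
  disjTL : ∀ v ∈ T, v ∉ L
  disjTR : ∀ v ∈ T, v ∉ R
  disjLR : ∀ v ∈ L, v ∉ R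
  sep : ∀ a ∈ L, ∀ b ∈ R, ¬ G.Adj a b
  indep : ∀ a ∈ T, ∀ b ∈ T, ¬ G.Adj a b

theorem IndepSep.symm {V : Type*} {G : SimpleGraph V} {W T L R : Set V}
    (h : IndepSep G W T L R) : IndepSep G W T R L :=
  ⟨h.neR, h.neL, fun v => by rw [h.union v, or_comm (a := v ∈ R)], h.disjTR, h.disjTL,
    fun v hv hv' => h.disjLR v hv' hv, fun a ha b hb hab => h.sep b hb a ha hab.symm, h.indep⟩

/-- The contraction of `x` into `u`, on the same vertex type; for `u ≠ x`, the vertex `x`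
becomes isolated. -/
def contract {V : Type*} [DecidableEq V] (G : SimpleGraph V) (u x : V) : SimpleGraph V where
  Adj a b := a ≠ b ∧ ∃ a' b', (if a' = x then u else a') = a ∧ (if b' = x then u else b') = b ∧
    G.Adj a' b'
  symm := ⟨fun _ _ ⟨h, a', b', ha, hb, hab⟩ => ⟨h.symm, b', a', hb, ha, hab.symm⟩⟩
  loopless := ⟨fun _ h => h.1 rfl⟩

theorem contract_adj_of_adj {V : Type*} [DecidableEq V] {G : SimpleGraph V} {u x a b : V}
    (ha : a ≠ x) (hb : b ≠ x) (h : G.Adj a b) : (contract G u x).Adj a b :=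
  ⟨h.ne, a, b, by simp [ha], by simp [hb], h⟩

theorem contract_adj_of_adj_right {V : Type*} [DecidableEq V] {G : SimpleGraph V} {u x b : V}
    (hbu : b ≠ u) (hb : b ≠ x) (h : G.Adj x b) : (contract G u x).Adj u b :=
  ⟨hbu.symm, x, b, by simp, by simp [hb], h⟩

/-- Contracting an edge `u x` that lies in a triangle loses at least two edges. -/
theorem ncard_edgesIn_contract {V : Type*} [Finite V] [DecidableEq V] {G : SimpleGraph V}
    {W : Set V} {u x y : V} (hu : u ∈ W) (hx : x ∈ W) (hy : y ∈ W) (hux : G.Adj u x)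
    (huy : G.Adj u y) (hxy : G.Adj x y) :
    (edgesIn (contract G u x) (W \ {x})).ncard + 2 ≤ (edgesIn G W).ncard := by
  classical
  set f : V → V := fun v => if v = x then u else v with hf
  have hsub : edgesIn (contract G u x) (W \ {x}) ⊆
      Sym2.map f '' (edgesIn G W \ {s(u, x), s(x, y)}) := by
    intro e
    induction e using Sym2.ind with
    | _ a b =>
      rintro ⟨hab, hW⟩
      obtain ⟨hne, a', b', rfl, rfl, hadj⟩ := hab
      have ha' : a' ∈ W := by
        by_cases h : a' = x
        · rwa [h]
        · simpa [h] using (hW _ (Sym2.mem_mk_left _ _)).1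
      have hb' : b' ∈ W := by
        by_cases h : b' = x
        · rwa [h]
        · simpa [h] using (hW _ (Sym2.mem_mk_right _ _)).1
      -- The edges `x y` and `u y` have the same image, so `u y` serves as the preimage.
      by_cases hc : s(a', b') = s(x, y)
      · refine ⟨s(u, y), ⟨⟨huy, ?_⟩, ?_⟩, ?_⟩
        · simp [hu, hy]
        · have h1 := hxy.ne
          have h2 := hux.ne
          have h3 := huy.ne
          simp only [Set.mem_insert_iff, Set.mem_singleton_iff, Sym2.eq_iff]
          grind
        · have : Sym2.map f s(a', b') = Sym2.map f s(x, y) := by rw [hc]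
          rw [Sym2.map_mk, Sym2.map_mk] at this
          rw [show s(if a' = x then u else a', if b' = x then u else b') = s(f a', f b') from rfl,
            this]
          simp [hf]
      · refine ⟨s(a', b'), ⟨⟨hadj, by simp [ha', hb']⟩, ?_⟩, rfl⟩
        simp only [Set.mem_insert_iff, Set.mem_singleton_iff, hc, or_false]
        intro h
        rw [Sym2.eq_iff] at h
        grind
  have h1 := Set.ncard_le_ncard hsub
  have h2 := Set.ncard_image_le (f := Sym2.map f) (s := edgesIn G W \ {s(u, x), s(x, y)})
  have hpair : ({s(u, x), s(x, y)} : Set (Sym2 V)).ncard = 2 := by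
    apply Set.ncard_pair
    have := huy.ne
    have := hux.ne
    rw [Ne, Sym2.eq_iff]
    grind
  have hss : ({s(u, x), s(x, y)} : Set (Sym2 V)) ⊆ edgesIn G W := by
    rintro e (rfl | rfl)
    · exact ⟨hux, by simp [hu, hx]⟩
    · exact ⟨hxy, by simp [hx, hy]⟩
  have h3 := Set.ncard_sdiff_add_ncard_of_subset hss
  omega

/-- If `u` and `x` are adjacent and `{u, x}` separates `L` from `R`, then an independent cut of
`G[L ∪ {u, x}]` is an independent cut of `G[W]`, as it does not separate `u` from `x`. -/
theorem IndepSep.extend {V : Type*} {G : SimpleGraph V} {W L R T L₁ R₁ : Set V} {u x : V}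
    (hux : G.Adj u x) (hW : ∀ v, v ∈ W ↔ v = u ∨ v = x ∨ v ∈ L ∨ v ∈ R)
    (hLR : ∀ v ∈ L, v ∉ R) (huR : u ∉ R) (hxR : x ∉ R)
    (hsep : ∀ a ∈ L, ∀ b ∈ R, ¬ G.Adj a b)
    (h : IndepSep G (L ∪ {u, x}) T L₁ R₁) : ∃ L' R', IndepSep G W T L' R' := by
  wlog hR₁ : u ∉ R₁ ∧ x ∉ R₁ generalizing L₁ R₁
  · refine this h.symm ?_
    have h1 := h.disjLR
    have h2 := h.disjTL
    have h3 := h.disjTR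
    have h4 := h.sep
    have h5 := h.union
    simp only [Set.mem_union, Set.mem_insert_iff, Set.mem_singleton_iff] at h5
    have := hux.symm
    grind
  have hR₁L : ∀ v ∈ R₁, v ∈ L := by
    intro v hv
    have := (h.union v).2 (Or.inr (Or.inr hv))
    simp only [Set.mem_union, Set.mem_insert_iff, Set.mem_singleton_iff] at this
    grind
  have h5 := h.union
  simp only [Set.mem_union, Set.mem_insert_iff, Set.mem_singleton_iff] at h5
  refine ⟨L₁ ∪ R, R₁, h.neL.mono Set.subset_union_left, h.neR, ?_, ?_, h.disjTR, ?_, ?_, h.indep⟩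
  · intro v
    have := h5 v
    have := hW v
    simp only [Set.mem_union]
    tauto
  · intro v hv
    have := h5 v
    have := h.disjTL v hv
    simp only [Set.mem_union]
    grind
  · rintro v (hv | hv)
    · exact h.disjLR v hv
    · exact fun hv' => hLR v (hR₁L v hv') hv
  · rintro a (ha | ha) b hb
    · exact h.sep a ha b hb
    · exact fun hab => hsep b (hR₁L b hb) a ha hab.symm

/-- The Chen–Yu theorem, with control over a prescribed vertex `u`. -/
theorem exists_indepSep {V : Type*} [Finite V] (N : ℕ) : ∀ (G : SimpleGraph V) (W : Set V) (u : V),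
    W.ncard = N → u ∈ W → (edgesIn G W).ncard + 4 ≤ 2 * W.ncard →
    ∃ T L R, IndepSep G W T L R ∧ (u ∉ T ∨ T = {u}) := by
  classical
  induction N using Nat.strong_induction_on with
  | _ N ih =>
  intro G W u hN hu he
  by_cases htri : ∃ x ∈ W, ∃ y ∈ W, G.Adj u x ∧ G.Adj u y ∧ G.Adj x y
  · obtain ⟨x, hx, y, hy, hux, huy, hxy⟩ := htri
    have hcard : (W \ {x}).ncard + 1 = W.ncard := Set.ncard_sdiff_singleton_add_one hx
    have hec := ncard_edgesIn_contract hu hx hy hux huy hxy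
    obtain ⟨T, L, R, h, hT⟩ := ih (W \ {x}).ncard (by omega) (contract G u x) (W \ {x}) u rfl
      ⟨hu, by simpa using hux.ne⟩ (by omega)
    have hun : ∀ v, (v ∈ W ∧ v ≠ x) ↔ v ∈ T ∨ v ∈ L ∨ v ∈ R := h.union
    have hxT : x ∉ T := fun hh => ((hun x).2 (Or.inl hh)).2 rfl
    have hxL : x ∉ L := fun hh => ((hun x).2 (Or.inr (Or.inl hh))).2 rfl
    have hxR : x ∉ R := fun hh => ((hun x).2 (Or.inr (Or.inr hh))).2 rfl
    have hadj : ∀ {a b}, a ≠ x → b ≠ x → G.Adj a b → (contract G u x).Adj a b :=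
      fun ha hb => contract_adj_of_adj ha hb
    rcases hT with huT | rfl
    · -- The cut avoids the contracted vertex: put `x` on the side of `u`.
      wlog huL : u ∈ L generalizing L R
      · refine this R L h.symm h.symm.union hxR hxL ?_
        have := (hun u).1 ⟨hu, hux.ne⟩
        tauto
      refine ⟨T, insert x L, R, ⟨Set.insert_nonempty _ _, h.neR, ?_, ?_, h.disjTR, ?_, ?_, ?_⟩,
        Or.inl huT⟩
      · intro v
        have := hun v
        rw [Set.mem_insert_iff]
        by_cases hv : v = x
        · subst hv
          tauto
        · tauto
      · rintro v hv (rfl | hv')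
        · exact hxT hv
        · exact h.disjTL v hv hv'
      · rintro v (rfl | hv)
        · exact hxR
        · exact h.disjLR v hv
      · rintro a (rfl | ha) b hb hab
        · refine h.sep u huL b hb (contract_adj_of_adj_right ?_ ?_ hab)
          · rintro rfl
            exact h.disjLR _ huL hb
          · exact hab.ne'
        · exact h.sep a ha b hb (hadj (by rintro rfl; exact hxL ha) (by rintro rfl; exact hxR hb)
            hab)
      · intro a ha b hb hab
        exact h.indep a ha b hb (hadj (by rintro rfl; exact hxT ha) (by rintro rfl; exact hxT hb)
            hab)
    · -- Now `{u, x}` separates `L` from `R` in `G[W]`.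
      have huL : u ∉ L := h.disjTL u rfl
      have huR : u ∉ R := h.disjTR u rfl
      have hWu : ∀ v, v ∈ W ↔ v = u ∨ v = x ∨ v ∈ L ∨ v ∈ R := by
        intro v
        have := hun v
        rw [Set.mem_singleton_iff] at this
        by_cases hv : v = x
        · subst hv
          tauto
        · tauto
      have hsep : ∀ a ∈ L, ∀ b ∈ R, ¬ G.Adj a b := fun a ha b hb hab =>
        h.sep a ha b hb (hadj (by rintro rfl; exact hxL ha) (by rintro rfl; exact hxR hb) hab)
      have hpair : ({u, x} : Set V).ncard = 2 := Set.ncard_pair hux.ne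
      have hdL : Disjoint L {u, x} := by
        rw [Set.disjoint_right]
        rintro v (rfl | rfl) <;> assumption
      have hdR : Disjoint R {u, x} := by
        rw [Set.disjoint_right]
        rintro v (rfl | rfl) <;> assumption
      have hdLR : Disjoint L R := Set.disjoint_left.2 h.disjLR
      have hcL : (L ∪ {u, x}).ncard = L.ncard + 2 := by rw [Set.ncard_union_eq hdL, hpair]
      have hcR : (R ∪ {u, x}).ncard = R.ncard + 2 := by rw [Set.ncard_union_eq hdR, hpair]
      have hcW : W.ncard = L.ncard + R.ncard + 2 := by
        have : W = (L ∪ R) ∪ {u, x} := by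
          ext v
          rw [hWu v]
          simp only [Set.mem_union, Set.mem_insert_iff, Set.mem_singleton_iff]
          tauto
        rw [this, Set.ncard_union_eq (Set.disjoint_union_left.2 ⟨hdL, hdR⟩), hpair,
          Set.ncard_union_eq hdLR]
      have hpL : 0 < L.ncard := (Set.ncard_pos).2 h.neL
      have hpR : 0 < R.ncard := (Set.ncard_pos).2 h.neR
      -- The two sides together have at most one edge more than `G[W]`.
      have hsum : (edgesIn G (L ∪ {u, x})).ncard + (edgesIn G (R ∪ {u, x})).ncard ≤
          (edgesIn G W).ncard + 1 := by
        rw [← Set.ncard_union_add_ncard_inter]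
        refine add_le_add (Set.ncard_le_ncard ?_) ?_
        · rintro e (⟨h1, h2⟩ | ⟨h1, h2⟩) <;> refine ⟨h1, fun v hv => (hWu v).2 ?_⟩ <;>
          · have := h2 v hv
            simp only [Set.mem_union, Set.mem_insert_iff, Set.mem_singleton_iff] at this
            tauto
        · rw [← Set.ncard_singleton s(u, x)]
          refine Set.ncard_le_ncard ?_ (Set.toFinite _)
          intro e
          induction e using Sym2.ind with
          | _ a b =>
            rintro ⟨⟨h1, h2⟩, ⟨-, h3⟩⟩
            have hne : a ≠ b := G.ne_of_adj h1
            have key : ∀ v ∈ s(a, b), v = u ∨ v = x := by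
              intro v hv
              have h4 := h2 v hv
              have h5 := h3 v hv
              have := h.disjLR v
              simp only [Set.mem_union, Set.mem_insert_iff, Set.mem_singleton_iff] at h4 h5
              tauto
            have ka := key a (Sym2.mem_mk_left _ _)
            have kb := key b (Sym2.mem_mk_right _ _)
            rw [Set.mem_singleton_iff, Sym2.eq_iff]
            grind
      have hor : (edgesIn G (L ∪ {u, x})).ncard + 4 ≤ 2 * (L ∪ {u, x}).ncard ∨
          (edgesIn G (R ∪ {u, x})).ncard + 4 ≤ 2 * (R ∪ {u, x}).ncard := by omega
      rcases hor with ho | ho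
      · obtain ⟨T, L₁, R₁, h₁, hT⟩ := ih _ (by omega) G (L ∪ {u, x}) u rfl (by simp) ho
        obtain ⟨L', R', h'⟩ := h₁.extend hux hWu h.disjLR huR hxR hsep
        exact ⟨T, L', R', h', hT⟩
      · obtain ⟨T, L₁, R₁, h₁, hT⟩ := ih _ (by omega) G (R ∪ {u, x}) u rfl (by simp) ho
        obtain ⟨L', R', h'⟩ := h₁.extend (W := W) hux (fun v => by rw [hWu v]; tauto)
          h.symm.disjLR huL hxL (fun a ha b hb hab => hsep b hb a ha hab.symm)
        exact ⟨T, L', R', h', hT⟩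
  · push Not at htri
    by_cases hall : ∀ v ∈ W, v ≠ u → G.Adj u v
    · -- `G[W]` is a star with centre `u`.
      have hW2 : 2 ≤ W.ncard := by omega
      obtain ⟨a, ha, hau⟩ := Set.exists_ne_of_one_lt_ncard (s := W) (by omega) u
      have he1 : 0 < (edgesIn G W).ncard :=
        (Set.ncard_pos (Set.toFinite _)).2 ⟨s(u, a), hall a ha hau, by simp [hu, ha]⟩
      obtain ⟨b, hb, hbn⟩ := Set.exists_mem_notMem_of_ncard_lt_ncard (s := {u, a}) (t := W)
        (by rw [Set.ncard_pair hau.symm]; omega)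
      simp only [Set.mem_insert_iff, Set.mem_singleton_iff, not_or] at hbn
      refine ⟨{u}, {a}, W \ {u, a}, ⟨⟨a, rfl⟩, ⟨b, hb, by simpa using hbn⟩, ?_, ?_, ?_, ?_, ?_, ?_⟩,
        Or.inr rfl⟩
      · intro v
        simp only [Set.mem_singleton_iff, Set.mem_sdiff, Set.mem_insert_iff]
        grind
      · rintro v rfl
        exact hau.symm
      · rintro v rfl
        simp
      · rintro v rfl
        simp
      · rintro v rfl b ⟨hb, hb'⟩
        simp only [Set.mem_insert_iff, Set.mem_singleton_iff, not_or] at hb'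
        exact htri v ha b hb (hall v ha hau) (hall b hb hb'.1)
      · rintro v rfl w rfl
        exact G.irrefl
    · push Not at hall
      obtain ⟨b, hb, hbu, hub⟩ := hall
      refine ⟨{v ∈ W | G.Adj u v}, {u}, {v ∈ W | v ≠ u ∧ ¬ G.Adj u v},
        ⟨⟨u, rfl⟩, ⟨b, hb, hbu, hub⟩, ?_, ?_, ?_, ?_, ?_, ?_⟩, Or.inl fun h => G.irrefl h.2⟩
      · intro v
        simp only [Set.mem_singleton_iff, Set.mem_ofPred_eq]
        by_cases hv : v = u
        · subst hv
          tauto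
        · tauto
      · rintro v ⟨-, h⟩ rfl
        exact G.irrefl h
      · rintro v ⟨-, h⟩ ⟨-, -, h'⟩
        exact h' h
      · rintro v rfl ⟨-, h, -⟩
        exact h rfl
      · rintro v rfl w ⟨-, -, h⟩
        exact h
      · rintro v ⟨hv, hv'⟩ w ⟨hw, hw'⟩
        exact htri v hv w hw hv' hw'

/-- in a minimal counterexample for bipartite cuts, if `A` is an
independent set maximizing the number of edges to its complement, with `k = |A|` and
`m = e(A, V∖A)`, then `|E(G)| ≥ m + 2n − 2k − 3`. -/
theorem stmt19 (α β : ℝ) (hα1 : 2 < α) (hα2 : α ≤ 3) (hβ : 4 * α - β = 6)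
    {V : Type} [Fintype V] (G : SimpleGraph V)
    (hG : MinCounterexample BipartiteClass α β G)
    (A : Set V) (hAind : ∀ x ∈ A, ∀ y ∈ A, ¬ G.Adj x y)
    (hAmax : ∀ X : Set V, (∀ x ∈ X, ∀ y ∈ X, ¬ G.Adj x y) →
      crossEdges G X ≤ crossEdges G A) :
    (Nat.card G.edgeSet : ℤ) ≥
      (crossEdges G A : ℤ) + 2 * Nat.card V - 2 * A.ncard - 3 := by
  classical
  by_contra hlt
  have hcardW : A.ncard + (Aᶜ : Set V).ncard = Nat.card V := Set.ncard_add_ncard_compl A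
  have hsplit : Nat.card G.edgeSet = crossEdges G A + (edgesIn G Aᶜ).ncard := by
    rw [Nat.card_coe_set_eq, crossEdges, ← Set.ncard_union_eq]
    · congr 1
      ext e
      induction e using Sym2.ind with
      | _ a b =>
        simp only [edgesIn, Set.mem_union, Set.mem_ofPred_eq, Set.mem_compl_iff]
        constructor
        · intro hab
          have hnot : ¬ (a ∈ A ∧ b ∈ A) := fun h => hAind a h.1 b h.2 hab
          by_cases ha : a ∈ A
          · exact Or.inl ⟨hab, a, ha, b, fun hb => hnot ⟨ha, hb⟩, rfl⟩
          · by_cases hb : b ∈ A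
            · exact Or.inl ⟨hab, b, hb, a, ha, Sym2.eq_swap⟩
            · exact Or.inr ⟨hab, by simp [ha, hb]⟩
        · rintro (h | h) <;> exact h.1
    · rw [Set.disjoint_left]
      rintro _ ⟨-, x, hx, y, -, rfl⟩ ⟨-, h⟩
      exact h x (Sym2.mem_mk_left _ _) hx
  have he : (edgesIn G Aᶜ).ncard + 4 ≤ 2 * (Aᶜ : Set V).ncard := by omega
  obtain ⟨u, hu⟩ : (Aᶜ : Set V).Nonempty := by
    rw [← Set.ncard_pos]
    omega
  obtain ⟨T, L, R, h, -⟩ := exists_indepSep _ G Aᶜ u rfl hu he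
  have hun := h.union
  refine hG.2.2.1 ⟨A ∪ T, ⟨L, R, h.neL, h.neR, Set.disjoint_left.2 h.disjLR, ?_, h.sep⟩, ?_⟩
  · ext v
    have h1 := hun v
    have h2 := h.disjTL v
    have h3 := h.disjTR v
    simp only [Set.mem_union, Set.mem_compl_iff] at h1 ⊢
    tauto
  · -- Colour `A` with one colour and `T` with the other.
    refine ⟨SimpleGraph.Coloring.mk (fun v => if v.1 ∈ A then (0 : Fin 2) else 1) ?_⟩
    rintro ⟨a, ha⟩ ⟨b, hb⟩ hab
    have hab' : G.Adj a b := hab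
    by_cases haA : a ∈ A <;> by_cases hbA : b ∈ A
    · exact absurd hab' (hAind a haA b hbA)
    · simp [haA, hbA]
    · simp [haA, hbA]
    · exact absurd hab' (h.indep a (ha.resolve_left haA) b (hb.resolve_left hbA))
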